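/- For every (α₀, α₁, β₀, β₁, γ₀, γ₁) ∈ ℝ⁶ not equal to (0,0,0,0,0,0), the set of zeros in (−1/4, 0) of the second Melnikov function M₂(h) = (α₀ + α₁·h)·I₀(h) + (β₀ + β₁·h)·I₁(h) + (γ₀ + γ₁·h)·I₂(h) has at most 5 elements. -/

import Mathlib

/-!
Put `z = 1 + 4h ∈ (0, 1)`. The substitution `x² = 1 + √z cos θ` gives
`I_k(h) = (z / √2) ∫₀^π (1 + √z cos θ)^((k-1)/2) sin² θ dθ` (`AbI_eq`). Expanding by the binomial
series and integrating termwise (the odd moments of `cos` vanish) turns `I₀` and `I₂` into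
`z / √2` times power series `∑ aₙ zⁿ` and `∑ bₙ zⁿ` that converge on all of `(0, 1)`, while `I₁` is
`z / √2` times the constant `π / 2`. The coefficients are hypergeometric: `aₙ > 0`,
`bₙ = -aₙ / (4n - 1)` and `16 (n+1) (n+2) aₙ₊₁ = (4n+1) (4n+3) aₙ`.

Hence `M₂ = (z / √2) ∑ cₙ zⁿ`, where `c₀` and `c₁` are arbitrary because of `I₁`, and for `n ≥ 2`
the product `cₙ (4n-1) (4n-3) (4n-5)` is `aₙ` times the value at `n` of a polynomial of degree at
most three (`melnikovCoef_mul`). This polynomial determines the coefficients of `I₀` and `I₂`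
(`signPoly_eq_zero`). So the sequence `c` has at most `2 + 3 = 5` sign changes, and Descartes' rule
of signs for power series bounds the number of zeros in `(0, 1)` by five.

The rule of signs is used in the form `encard_zeros_powerSeries_le`: if
`(n - m₁) ⋯ (n - m_k) cₙ ≥ 0` for all `n`, not always with equality, then `∑ cₙ zⁿ` has at most `k`
zeros in `(0, 1)`. It follows from Rolle's theorem by induction on `k`, since differentiating
`z^(-m) ∑ cₙ zⁿ` replaces `cₙ` by `(n - m) cₙ`.
-/

open Set

/-- Lower endpoint of the oval projection: `x₋(h) = √(1 − √(1+4h))`. -/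
noncomputable def xminus (h : ℝ) : ℝ := Real.sqrt (1 - Real.sqrt (1 + 4*h))

/-- Upper endpoint of the oval projection: `x₊(h) = √(1 + √(1+4h))`. -/
noncomputable def xplus (h : ℝ) : ℝ := Real.sqrt (1 + Real.sqrt (1 + 4*h))

/-- The Abelian integral `I_k(h) = 2∫_{x₋(h)}^{x₊(h)} x^k √(2h + x² − x⁴/2) dx`. -/
noncomputable def AbI (k : ℕ) (h : ℝ) : ℝ :=
  2 * ∫ x in (xminus h)..(xplus h), x ^ k * Real.sqrt (2*h + x^2 - x^4/2)

/-! ### Descartes' rule of signs for power series -/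

/-- Counting form of Rolle's theorem: if `g` vanishes strictly between any two points of `I` at which
`f` agrees, and `g` has at most `k` zeros in `I`, then `f` takes each value at most `k + 1` times. -/
theorem encard_zeros_le_succ {f g : ℝ → ℝ} {I : Set ℝ} [I.OrdConnected] {k : ℕ}
    (hfg : ∀ x ∈ I, ∀ y ∈ I, x < y → f x = f y →
      ∃ z ∈ Ioo x y, g z = 0)
    (hzero : {z ∈ I | g z = 0}.encard ≤ k) (v : ℝ) :
    {z ∈ I | f z = v}.encard ≤ k + 1 := by
  by_contra! hlt
  obtain ⟨S, hS, hcard⟩ := Set.exists_subset_encard_eq (Order.add_one_le_of_lt hlt)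
  have hfin : S.Finite := Set.finite_of_encard_eq_coe (k := k + 1 + 1) (by simpa using hcard)
  obtain ⟨T, rfl⟩ := hfin.exists_finset_coe
  have hT : T.card = k + 1 + 1 := by
    rw [Set.encard_coe_eq_coe_finsetCard] at hcard
    exact_mod_cast hcard
  let e := T.orderEmbOfFin hT
  have he : ∀ i, e i ∈ I ∧ f (e i) = v := fun i ↦ hS (T.orderEmbOfFin_mem hT i)
  have hstep : ∀ i : Fin (k + 1), e i.castSucc < e i.succ := fun i ↦
    e.strictMono Fin.castSucc_lt_succ
  choose ξ hξ hgξ using fun i : Fin (k + 1) ↦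
    hfg _ (he i.castSucc).1 _ (he i.succ).1 (hstep i) ((he _).2.trans (he _).2.symm)
  have hmono : StrictMono ξ := by
    intro i j hij
    calc ξ i < e i.succ := (hξ i).2
      _ ≤ e j.castSucc := e.monotone (by
        rw [Fin.le_def]; simpa using hij)
      _ < ξ j := (hξ j).1
  have hsub : Set.range ξ ⊆ {z ∈ I | g z = 0} := by
    rintro _ ⟨i, rfl⟩
    exact ⟨Set.OrdConnected.out ‹_› (he i.castSucc).1 (he i.succ).1 (Ioo_subset_Icc_self (hξ i)), hgξ i⟩
  have h1 := (Set.encard_le_encard hsub).trans hzero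
  rw [← Set.image_univ, hmono.injective.encard_image, Set.encard_univ] at h1
  simp only [ENat.card_eq_coe_fintype_card, Fintype.card_fin] at h1
  have : k + 1 ≤ k := by exact_mod_cast h1
  omega

/-- The sequence `c` grows at most polynomially, so that `∑ cₙ zⁿ` converges for `|z| < 1`. -/
def PolyGrowth (c : ℕ → ℝ) : Prop := ∃ (C : ℝ) (d : ℕ), ∀ n, |c n| ≤ C * ((n : ℝ) + 1) ^ d

theorem PolyGrowth.mul_sub {c : ℕ → ℝ} (hc : PolyGrowth c) (m : ℝ) :
    PolyGrowth fun n ↦ ((n : ℝ) - m) * c n := by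
  obtain ⟨C, d, h⟩ := hc
  refine ⟨(1 + |m|) * C, d + 1, fun n ↦ ?_⟩
  have h1 : |(n : ℝ) - m| ≤ (1 + |m|) * ((n : ℝ) + 1) := by
    have := abs_sub (n : ℝ) m
    rw [Nat.abs_cast] at this
    nlinarith [abs_nonneg m, (Nat.cast_nonneg n : (0 : ℝ) ≤ n)]
  rw [abs_mul]
  calc _ ≤ (1 + |m|) * ((n : ℝ) + 1) * (C * ((n : ℝ) + 1) ^ d) := by
        gcongr
        exact h n
    _ = _ := by ring

theorem PolyGrowth.add {c c' : ℕ → ℝ} (hc : PolyGrowth c) (hc' : PolyGrowth c') :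
    PolyGrowth fun n ↦ c n + c' n := by
  obtain ⟨C, d, h⟩ := hc
  obtain ⟨C', d', h'⟩ := hc'
  refine ⟨|C| + |C'|, d + d', fun n ↦ (abs_add_le _ _).trans ?_⟩
  have h1 : (1 : ℝ) ≤ (n : ℝ) + 1 := by simp
  rw [add_mul]
  gcongr
  · refine (h n).trans ?_
    exact mul_le_mul (le_abs_self _) (pow_le_pow_right₀ h1 (by omega)) (by positivity)
      (abs_nonneg _)
  · refine (h' n).trans ?_
    exact mul_le_mul (le_abs_self _) (pow_le_pow_right₀ h1 (by omega)) (by positivity)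
      (abs_nonneg _)

theorem PolyGrowth.summable_norm {c : ℕ → ℝ} (hc : PolyGrowth c) {r : ℝ} (hr0 : 0 < r)
    (hr : r < 1) : Summable fun n ↦ |c n| * r ^ n := by
  obtain ⟨C, d, h⟩ := hc
  have hs : Summable fun n : ℕ ↦ (n : ℝ) ^ d * r ^ n :=
    summable_pow_mul_geometric_of_norm_lt_one d (by rwa [Real.norm_of_nonneg hr0.le])
  have hs' := ((summable_nat_add_iff 1).2 hs).mul_left (C * r⁻¹)
  refine Summable.of_nonneg_of_le (fun n ↦ by positivity) (fun n ↦ ?_) hs'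
  calc |c n| * r ^ n ≤ C * ((n : ℝ) + 1) ^ d * r ^ n := by gcongr; exact h n
    _ = C * r⁻¹ * (((n + 1 : ℕ) : ℝ) ^ d * r ^ (n + 1)) := by
      push_cast
      rw [pow_succ r]
      field_simp

theorem PolyGrowth.summable {c : ℕ → ℝ} (hc : PolyGrowth c) {z : ℝ} (hz : z ∈ Ioo (0 : ℝ) 1) :
    Summable fun n ↦ c n * z ^ n := by
  refine Summable.of_norm ?_
  simpa [abs_mul, abs_of_pos hz.1] using hc.summable_norm hz.1 hz.2

/-- Termwise differentiation, with `n cₙ zⁿ⁻¹` written as `z⁻¹ (n cₙ zⁿ)`. -/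
theorem PolyGrowth.hasDerivAt {c : ℕ → ℝ} (hc : PolyGrowth c) {z : ℝ}
    (hz : z ∈ Ioo (0 : ℝ) 1) :
    HasDerivAt (fun z ↦ ∑' n : ℕ, c n * z ^ n) (z⁻¹ * ∑' n : ℕ, (n * c n) * z ^ n) z := by
  have hz0 := hz.1
  obtain ⟨r, hzr, hr⟩ := exists_between hz.2
  have hr0 : 0 < r := hz0.trans hzr
  have hc' : PolyGrowth fun n ↦ (n : ℝ) * c n := by simpa using hc.mul_sub 0
  have h := hasDerivAt_tsum_of_isPreconnected (t := Ioo (z / 2) r)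
    (g := fun n z ↦ c n * z ^ n) (g' := fun n z ↦ z⁻¹ * ((n * c n) * z ^ n))
    (u := fun n ↦ (z / 2)⁻¹ * (|n * c n| * r ^ n)) (y₀ := z) (y := z)
    ((hc'.summable_norm hr0 hr).mul_left _) isOpen_Ioo isPreconnected_Ioo ?_ ?_
    ⟨by linarith, hzr⟩ (hc.summable hz) ⟨by linarith, hzr⟩
  · rwa [tsum_mul_left] at h
  · intro n y hy
    have hy0 : 0 < y := lt_trans (by linarith) hy.1
    have := (hasDerivAt_pow n y).const_mul (c n)
    refine this.congr_deriv ?_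
    rcases n with _ | n
    · simp
    · rw [Nat.add_sub_cancel, pow_succ]
      field_simp
  · intro n y hy
    have hy0 : 0 < y := lt_trans (by linarith) hy.1
    rw [norm_mul, norm_mul, norm_inv, norm_pow, Real.norm_of_nonneg hy0.le, Real.norm_eq_abs]
    gcongr
    · exact hy.1.le
    · exact hy.2.le

/-- Descartes' rule of signs for power series on `(0, 1)`: if `∏ (n - mᵢ) cₙ` is nonnegative for all
`n` and positive for some `n`, the number of zeros is at most the number of factors. -/
theorem encard_zeros_powerSeries_le (L : List ℝ) : ∀ c : ℕ → ℝ, PolyGrowth c →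
    (∀ n : ℕ, 0 ≤ (L.map fun m ↦ (n : ℝ) - m).prod * c n) →
    (∃ n : ℕ, 0 < (L.map fun m ↦ (n : ℝ) - m).prod * c n) →
    {z ∈ Ioo (0 : ℝ) 1 | ∑' n : ℕ, c n * z ^ n = 0}.encard ≤ L.length := by
  induction L with
  | nil =>
    intro c hc h0 ⟨N, hN⟩
    simp only [List.map_nil, List.prod_nil, one_mul] at h0 hN
    simp only [List.length_nil, Nat.cast_zero, nonpos_iff_eq_zero, encard_eq_zero]
    refine eq_empty_of_forall_notMem fun z ⟨hz, h⟩ ↦ ?_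
    have := (hc.summable hz).tsum_pos (fun n ↦ mul_nonneg (h0 n) (pow_nonneg hz.1.le n)) N
      (mul_pos hN (pow_pos hz.1 N))
    exact this.ne' h
  | cons m L ih =>
    intro c hc h0 hpos
    have hc' := hc.mul_sub m
    have hz := ih (fun n ↦ ((n : ℝ) - m) * c n) hc'
      (fun n ↦ (h0 n).trans_eq (by simp only [List.map_cons, List.prod_cons]; ring))
      (hpos.imp fun n h ↦ h.trans_eq (by simp only [List.map_cons, List.prod_cons]; ring))
    -- The operator `z d/dz - m` multiplies the `n`-th coefficient by `n - m`.
    have hd : ∀ z ∈ Ioo (0 : ℝ) 1, HasDerivAt (fun z ↦ z ^ (-m) * ∑' n : ℕ, c n * z ^ n)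
        (z ^ (-m - 1) * ∑' n : ℕ, (((n : ℝ) - m) * c n) * z ^ n) z := by
      intro z hz
      have hn : Summable fun n : ℕ ↦ (n * c n) * z ^ n :=
        PolyGrowth.summable (by simpa using hc.mul_sub 0) hz
      refine ((Real.hasDerivAt_rpow_const (Or.inl hz.1.ne')).mul (hc.hasDerivAt hz)).congr_deriv ?_
      have : ∑' n : ℕ, (((n : ℝ) - m) * c n) * z ^ n
          = ∑' n : ℕ, (n * c n) * z ^ n - m * ∑' n : ℕ, c n * z ^ n := by
        rw [← tsum_mul_left, ← hn.tsum_sub ((hc.summable hz).mul_left m)]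
        exact tsum_congr fun n ↦ by ring
      rw [this, Real.rpow_sub_one hz.1.ne']
      field_simp
      ring
    have key := encard_zeros_le_succ (I := Ioo (0 : ℝ) 1) (k := L.length)
      (f := fun z ↦ z ^ (-m) * ∑' n : ℕ, c n * z ^ n)
      (g := fun z ↦ ∑' n : ℕ, (((n : ℝ) - m) * c n) * z ^ n)
      ?_ hz 0
    · rw [List.length_cons, Nat.cast_add_one]
      refine le_trans (encard_le_encard ?_) key
      rintro z ⟨hz, h⟩
      exact ⟨hz, by simp [h]⟩
    · intro x hx y hy hxy hfe
      have hI : Icc x y ⊆ Ioo (0 : ℝ) 1 := Icc_subset_Ioo hx.1 hy.2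
      obtain ⟨w, hw, hw0⟩ := exists_hasDerivAt_eq_zero hxy
        (fun z hz ↦ (hd z (hI hz)).continuousAt.continuousWithinAt) hfe
        (fun z hz ↦ hd z (hI (Ioo_subset_Icc_self hz)))
      refine ⟨w, hw, (mul_eq_zero.mp hw0).resolve_left ?_⟩
      exact (Real.rpow_pos_of_pos (hI (Ioo_subset_Icc_self hw)).1 _).ne'

/-- Multiplying a real polynomial by its linear factors over `ℝ`, with multiplicity, leaves a square
times a polynomial without real roots, whose sign `ε` compensates. -/
theorem exists_list_mul_eval_nonneg {p : Polynomial ℝ} (hp : p ≠ 0) :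
    ∃ (L : List ℝ) (ε : ℝ), L.length ≤ p.natDegree ∧ ε ≠ 0 ∧
      (∀ x, 0 ≤ (L.map fun m ↦ x - m).prod * (ε * p.eval x)) ∧
      (∀ x, p.eval x ≠ 0 → 0 < (L.map fun m ↦ x - m).prod * (ε * p.eval x)) := by
  obtain ⟨q, hq, hdeg, hroots⟩ := Polynomial.exists_prod_multiset_X_sub_C_mul p
  have hq0 : q ≠ 0 := by rintro rfl; simp at hq; exact hp hq.symm
  have hne : ∀ x, q.eval x ≠ 0 := by
    intro x hx
    have : x ∈ q.roots := (Polynomial.mem_roots hq0).2 hx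
    simp [hroots] at this
  have hsign : ∀ x, 0 < q.eval 0 * q.eval x := by
    intro x
    by_contra! hle
    have hcont : Continuous fun x ↦ q.eval 0 * q.eval x := by fun_prop
    obtain ⟨y, hy⟩ := mem_range_of_exists_le_of_exists_ge hcont ⟨x, hle⟩
      ⟨0, mul_self_nonneg _⟩
    exact (mul_ne_zero (hne 0) (hne y)) hy
  have hev : ∀ x, p.eval x = (p.roots.toList.map fun m ↦ x - m).prod * q.eval x := by
    intro x
    conv_lhs => rw [← hq]
    rw [Polynomial.eval_mul, Polynomial.eval_multiset_prod, Multiset.map_map]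
    congr 1
    conv_lhs => rw [← p.roots.coe_toList]
    rw [Multiset.map_coe, Multiset.prod_coe]
    simp [Function.comp_def]
  have hid : ∀ x, (p.roots.toList.map fun m ↦ x - m).prod * (q.eval 0 * p.eval x)
      = (p.roots.toList.map fun m ↦ x - m).prod ^ 2 * (q.eval 0 * q.eval x) := by
    intro x; rw [hev x]; ring
  refine ⟨p.roots.toList, q.eval 0, ?_, hne 0, fun x ↦ ?_, fun x hx ↦ ?_⟩
  · simpa using Polynomial.card_roots' p
  · rw [hid]; exact mul_nonneg (sq_nonneg _) (hsign x).le
  · rw [hid]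
    refine mul_pos ((sq_nonneg _).lt_of_ne' (pow_ne_zero 2 ?_)) (hsign x)
    intro h0
    rw [hev x, h0, zero_mul] at hx
    exact hx rfl

/-! ### Power series of the Abelian integrals at the center -/

theorem hasSum_one_add_rpow (a : ℝ) {x : ℝ} (hx : |x| < 1) :
    HasSum (fun n : ℕ ↦ Ring.choose a n * x ^ n) ((1 + x) ^ a) := by
  have hmem : x ∈ Metric.eball (0 : ℝ) 1 := by
    rw [← ENNReal.ofReal_one, Metric.eball_ofReal]
    simpa using hx
  have h := (Real.one_add_rpow_hasFPowerSeriesOnBall_zero (a := a)).hasSum hmem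
  simpa [binomialSeries_apply, -FormalMultilinearSeries.apply_eq_prod_smul_coeff] using h

theorem choose_succ_mul (a : ℝ) (n : ℕ) :
    Ring.choose a (n + 1) * (n + 1) = Ring.choose a n * (a - n) := by
  rw [Ring.choose_eq_smul, Ring.choose_eq_smul, descPochhammer_succ_right, Polynomial.smeval_mul,
    Nat.factorial_succ]
  have := Nat.factorial_ne_zero n
  simp only [Polynomial.smeval_sub, Polynomial.smeval_X, Polynomial.smeval_natCast, smul_eq_mul]
  push_cast
  field_simp
  simp

/-- The identity `binom(1/2, n) = -binom(-1/2, n) / (2n - 1)`, which ties `I₂` to `I₀`. -/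
theorem choose_half_mul (n : ℕ) :
    Ring.choose (1 / 2 : ℝ) n * (2 * n - 1) = -Ring.choose (-1 / 2 : ℝ) n := by
  induction n with
  | zero => simp
  | succ n ih =>
    have h1 := choose_succ_mul (1 / 2) n
    have h2 := choose_succ_mul (-1 / 2) n
    have h3 : (n : ℝ) + 1 ≠ 0 := by positivity
    apply mul_right_cancel₀ h3
    push_cast
    linear_combination (2 * (n : ℝ) + 1) * h1 + h2 - ((n : ℝ) + 1 / 2) * ih

/-- The moments `∫₀^π cosⁿ θ sin² θ dθ`. -/
noncomputable def cosMoment (n : ℕ) : ℝ := ∫ θ in (0 : ℝ)..Real.pi, Real.cos θ ^ n * Real.sin θ ^ 2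

theorem cosMoment_zero : cosMoment 0 = Real.pi / 2 := by
  simp [cosMoment, integral_sin_sq]

theorem cosMoment_one : cosMoment 1 = 0 := by
  have h : ∀ θ ∈ uIcc (0 : ℝ) Real.pi, HasDerivAt (fun θ ↦ Real.sin θ ^ 3 / 3)
      (Real.cos θ ^ 1 * Real.sin θ ^ 2) θ := by
    intro θ _
    refine (((Real.hasDerivAt_sin θ).pow 3).div_const 3).congr_deriv ?_
    push_cast
    ring
  rw [cosMoment, intervalIntegral.integral_eq_sub_of_hasDerivAt h
    (Continuous.intervalIntegrable (by fun_prop) _ _)]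
  simp

/-- Obtained by integrating the derivative of `cosⁿ⁺¹ θ sin³ θ` over `[0, π]`. -/
theorem cosMoment_add_two (n : ℕ) :
    (n + 4) * cosMoment (n + 2) = (n + 1) * cosMoment n := by
  have h : ∀ θ ∈ uIcc (0 : ℝ) Real.pi, HasDerivAt (fun θ ↦ Real.cos θ ^ (n + 1) * Real.sin θ ^ 3)
      ((n + 4) * (Real.cos θ ^ (n + 2) * Real.sin θ ^ 2)
        - (n + 1) * (Real.cos θ ^ n * Real.sin θ ^ 2)) θ := by
    intro θ _
    refine (((Real.hasDerivAt_cos θ).pow (n + 1)).mul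
      ((Real.hasDerivAt_sin θ).pow 3)).congr_deriv ?_
    simp only [Pi.pow_apply, Nat.add_sub_cancel]
    push_cast
    have := Real.sin_sq_add_cos_sq θ
    linear_combination (-((n : ℝ) + 1) * Real.cos θ ^ n * Real.sin θ ^ 2) * this
  have hint : ∀ m : ℕ, IntervalIntegrable (fun θ ↦ Real.cos θ ^ m * Real.sin θ ^ 2)
      MeasureTheory.volume 0 Real.pi := fun m ↦ Continuous.intervalIntegrable (by fun_prop) _ _
  have h2 := intervalIntegral.integral_eq_sub_of_hasDerivAt h
    (((hint _).const_mul _).sub ((hint _).const_mul _))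
  rw [intervalIntegral.integral_sub ((hint _).const_mul _) ((hint _).const_mul _),
    intervalIntegral.integral_const_mul, intervalIntegral.integral_const_mul] at h2
  simp only [Real.sin_pi, Real.sin_zero] at h2
  simp only [cosMoment]
  linear_combination h2

theorem cosMoment_odd (n : ℕ) : cosMoment (2 * n + 1) = 0 := by
  induction n with
  | zero => exact cosMoment_one
  | succ n ih =>
    have h := cosMoment_add_two (2 * n + 1)
    rw [ih, mul_zero] at h
    exact (mul_eq_zero.mp h).resolve_left (by positivity)

/-- Termwise integration of the binomial series; only even powers of `r` survive. -/
theorem hasSum_integral_rpow (a : ℝ) {r : ℝ} (hr0 : 0 < r) (hr : r < 1) :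
    HasSum (fun n : ℕ ↦ Ring.choose a (2 * n) * cosMoment (2 * n) * (r ^ 2) ^ n)
      (∫ θ in (0 : ℝ)..Real.pi, (1 + r * Real.cos θ) ^ a * Real.sin θ ^ 2) := by
  have hb : ∀ θ, |r * Real.cos θ| ≤ r := fun θ ↦ by
    rw [abs_mul, abs_of_pos hr0]
    exact mul_le_of_le_one_right hr0.le (Real.abs_cos_le_one θ)
  have hs : Summable fun n : ℕ ↦ |Ring.choose a n * r ^ n| :=
    (hasSum_one_add_rpow a (by rwa [abs_of_pos hr0])).summable.abs
  have h := intervalIntegral.hasSum_integral_of_dominated_convergence (a := 0) (b := Real.pi)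
    (μ := MeasureTheory.volume)
    (F := fun (n : ℕ) θ ↦ Ring.choose a n * (r * Real.cos θ) ^ n * Real.sin θ ^ 2)
    (f := fun θ ↦ (1 + r * Real.cos θ) ^ a * Real.sin θ ^ 2)
    (fun n _ ↦ |Ring.choose a n * r ^ n|)
    (fun n ↦ Continuous.aestronglyMeasurable (by fun_prop))
    (fun n ↦ Filter.Eventually.of_forall fun θ _ ↦ ?_)
    (Filter.Eventually.of_forall fun _ _ ↦ hs)
    (by simp)
    (Filter.Eventually.of_forall fun θ _ ↦
      (hasSum_one_add_rpow a ((hb θ).trans_lt hr)).mul_right _)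
  · have he : ∀ n : ℕ, (∫ θ in (0 : ℝ)..Real.pi,
        Ring.choose a n * (r * Real.cos θ) ^ n * Real.sin θ ^ 2)
        = Ring.choose a n * r ^ n * cosMoment n := by
      intro n
      rw [cosMoment, ← intervalIntegral.integral_const_mul]
      congr 1
      ext θ
      ring
    simp only [he] at h
    have hinj : Function.Injective fun n : ℕ ↦ 2 * n := fun a b h ↦ by simpa using h
    rw [← hinj.hasSum_iff] at h
    · refine h.congr_fun ?_
      intro n
      simp only [Function.comp_apply, pow_mul]
      ring
    · intro n hn
      obtain ⟨k, rfl | rfl⟩ := n.even_or_odd'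
      · exact absurd ⟨k, rfl⟩ hn
      · rw [cosMoment_odd, mul_zero]
  · rw [norm_mul, norm_mul, norm_pow, abs_mul, abs_pow, abs_of_pos hr0, Real.norm_eq_abs,
      Real.norm_eq_abs]
    have h1 : ‖Real.sin θ ^ 2‖ ≤ 1 := by
      rw [Real.norm_of_nonneg (sq_nonneg _)]
      exact Real.sin_sq_le_one θ
    calc _ ≤ |Ring.choose a n| * r ^ n * 1 := by
          gcongr
          exact hb θ
      _ = _ := mul_one _

/-- The substitution `x = √(1 + √(1 + 4h) cos θ)`, which straightens the oval. -/
theorem AbI_eq (k : ℕ) {h : ℝ} (hh : h ∈ Ioo (-(1 : ℝ) / 4) 0) :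
    AbI k h = (1 + 4 * h) / √2 *
      ∫ θ in (0 : ℝ)..Real.pi, (1 + √(1 + 4 * h) * Real.cos θ) ^ (((k : ℝ) - 1) / 2) * Real.sin θ ^ 2 := by
  obtain ⟨r, hr⟩ : ∃ r, r = √(1 + 4 * h) := ⟨_, rfl⟩
  have hz0 : 0 < 1 + 4 * h := by linarith [hh.1]
  have hr0 : 0 < r := hr ▸ Real.sqrt_pos.2 hz0
  have hr2 : r ^ 2 = 1 + 4 * h := by rw [hr, Real.sq_sqrt hz0.le]
  have hr1 : r < 1 := by nlinarith [hh.2]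
  have hpos : ∀ θ, 0 < 1 + r * Real.cos θ := fun θ ↦ by
    nlinarith [Real.neg_one_le_cos θ]
  have hsub := intervalIntegral.integral_comp_mul_deriv (a := Real.pi) (b := 0)
    (f := fun θ ↦ √(1 + r * Real.cos θ))
    (f' := fun θ ↦ (r * -Real.sin θ) / (2 * √(1 + r * Real.cos θ)))
    (g := fun x ↦ x ^ k * √(2 * h + x ^ 2 - x ^ 4 / 2))
    (fun θ _ ↦ (((Real.hasDerivAt_cos θ).const_mul r).const_add 1).sqrt (hpos θ).ne')
    (by
      refine Continuous.continuousOn (Continuous.div (by fun_prop) (by fun_prop) fun θ ↦ ?_)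
      exact mul_ne_zero two_ne_zero (Real.sqrt_pos.2 (hpos θ)).ne')
    (by fun_prop)
  simp only [Real.cos_pi, Real.cos_zero, mul_neg, mul_one, ← sub_eq_add_neg] at hsub
  rw [AbI, xminus, xplus, ← hr, ← hsub, intervalIntegral.integral_symm,
    ← intervalIntegral.integral_neg, ← intervalIntegral.integral_const_mul,
    ← intervalIntegral.integral_const_mul]
  refine intervalIntegral.integral_congr fun θ hθ ↦ ?_
  rw [uIcc_of_le Real.pi_pos.le] at hθ
  have hs := Real.sin_nonneg_of_mem_Icc hθ
  have hx := Real.sq_sqrt (hpos θ).le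
  have hx0 := Real.sqrt_pos.2 (hpos θ)
  have hroot : √(2 * h + √(1 + r * Real.cos θ) ^ 2 - √(1 + r * Real.cos θ) ^ 4 / 2)
      = r * Real.sin θ / √2 := by
    rw [show √(1 + r * Real.cos θ) ^ 4 = (√(1 + r * Real.cos θ) ^ 2) ^ 2 by ring, hx,
      show 2 * h + (1 + r * Real.cos θ) - (1 + r * Real.cos θ) ^ 2 / 2
        = (r * Real.sin θ / √2) ^ 2 by
          rw [div_pow, Real.sq_sqrt zero_le_two, mul_pow, Real.sin_sq]
          linear_combination -hr2 / 2]
    exact Real.sqrt_sq (by positivity)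
  have hpow : (1 + r * Real.cos θ) ^ (((k : ℝ) - 1) / 2)
      = √(1 + r * Real.cos θ) ^ k / √(1 + r * Real.cos θ) := by
    rw [sub_div, Real.rpow_sub (hpos θ), ← Real.sqrt_eq_rpow, Real.rpow_div_two_eq_sqrt _ (hpos θ).le,
      Real.rpow_natCast]
  simp only [Function.comp_apply, hroot, hpow, ← hr2]
  field_simp

/-- The coefficients of `√2 I₀ / z` in powers of `z = 1 + 4h`. -/
noncomputable def aCoef (n : ℕ) : ℝ := Ring.choose (-1 / 2 : ℝ) (2 * n) * cosMoment (2 * n)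

/-- The coefficients of `√2 I₂ / z` in powers of `z = 1 + 4h`, see `bCoef_eq`. -/
noncomputable def bCoef (n : ℕ) : ℝ := -aCoef n / (4 * n - 1)

theorem four_mul_sub_one_ne_zero (n : ℕ) : (4 * n - 1 : ℝ) ≠ 0 := by
  intro h
  have h1 : (4 * n : ℝ) = 1 := by linarith
  have h2 : 4 * n = 1 := by exact_mod_cast h1
  omega

theorem bCoef_eq (n : ℕ) : bCoef n = Ring.choose (1 / 2 : ℝ) (2 * n) * cosMoment (2 * n) := by
  rw [bCoef, aCoef, div_eq_iff (four_mul_sub_one_ne_zero n)]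
  have h := choose_half_mul (2 * n)
  push_cast at h
  linear_combination -cosMoment (2 * n) * h

theorem aCoef_zero : aCoef 0 = Real.pi / 2 := by
  simp [aCoef, cosMoment_zero]

theorem aCoef_succ (n : ℕ) :
    16 * (n + 1) * (n + 2) * aCoef (n + 1) = (4 * n + 1) * (4 * n + 3) * aCoef n := by
  have h1 := choose_succ_mul (-1 / 2) (2 * n)
  have h2 := choose_succ_mul (-1 / 2) (2 * n + 1)
  have h3 := cosMoment_add_two (2 * n)
  simp only [aCoef, show 2 * (n + 1) = 2 * n + 1 + 1 by ring]
  rw [show 2 * n + 2 = 2 * n + 1 + 1 by ring] at h3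
  push_cast at h1 h2 h3
  have hn : (2 * n + 1 : ℝ) ≠ 0 := by positivity
  apply mul_right_cancel₀ hn
  linear_combination 8 * (n + 2) * (2 * n + 1) * cosMoment (2 * n + 1 + 1) * h2
    + 8 * (n + 2) * cosMoment (2 * n + 1 + 1) * (-1 / 2 - (2 * n + 1)) * h1
    + 4 * Ring.choose (-1 / 2 : ℝ) (2 * n) * (-1 / 2 - 2 * n) * (-1 / 2 - (2 * n + 1)) * h3

theorem aCoef_pos (n : ℕ) : 0 < aCoef n := by
  induction n with
  | zero => rw [aCoef_zero]; positivity
  | succ n ih =>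
    have h := aCoef_succ n
    have h1 : 0 < 16 * ((n : ℝ) + 1) * (n + 2) * aCoef (n + 1) := by rw [h]; positivity
    exact pos_of_mul_pos_right h1 (by positivity)

theorem aCoef_le (n : ℕ) : aCoef n ≤ Real.pi / 2 := by
  induction n with
  | zero => rw [aCoef_zero]
  | succ n ih =>
    refine le_trans ?_ ih
    have h := aCoef_succ n
    have h0 := aCoef_pos n
    have hn : (0 : ℝ) ≤ n := Nat.cast_nonneg n
    have hpos : (0 : ℝ) < 16 * (n + 1) * (n + 2) := by positivity
    refine le_of_mul_le_mul_left ?_ hpos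
    rw [h]
    exact mul_le_mul_of_nonneg_right (by nlinarith) h0.le

theorem abs_aCoef_le (n : ℕ) : |aCoef n| ≤ Real.pi / 2 := by
  rw [abs_of_pos (aCoef_pos n)]
  exact aCoef_le n

theorem abs_bCoef_le (n : ℕ) : |bCoef n| ≤ Real.pi / 2 := by
  rw [bCoef, abs_div, abs_neg]
  refine (div_le_self (abs_nonneg _) ?_).trans (abs_aCoef_le n)
  rcases n with _ | n
  · simp
  · refine le_trans ?_ (le_abs_self _)
    push_cast
    linarith [(Nat.cast_nonneg n : (0 : ℝ) ≤ n)]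

/-! ### Signs of the coefficients of the Melnikov function -/

/-- The coefficients of `(p + q z) ∑ aₙ zⁿ + (s + t z) ∑ bₙ zⁿ + (u + v z)`. -/
noncomputable def melnikovCoef (p q s t u v : ℝ) : ℕ → ℝ
  | 0 => p * aCoef 0 + s * bCoef 0 + u
  | 1 => p * aCoef 1 + s * bCoef 1 + (q * aCoef 0 + t * bCoef 0) + v
  | n + 2 => p * aCoef (n + 2) + s * bCoef (n + 2) + (q * aCoef (n + 1) + t * bCoef (n + 1))

theorem hasSum_melnikovCoef {p q s t u v z A B : ℝ}
    (hA : HasSum (fun n : ℕ ↦ aCoef n * z ^ n) A) (hB : HasSum (fun n : ℕ ↦ bCoef n * z ^ n) B) :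
    HasSum (fun n : ℕ ↦ melnikovCoef p q s t u v n * z ^ n)
      ((p + q * z) * A + (s + t * z) * B + (u + v * z)) := by
  have hA1 := ((hasSum_nat_add_iff' 1).2 hA).mul_left (q * z)
  have hB1 := ((hasSum_nat_add_iff' 1).2 hB).mul_left (t * z)
  have hA2 := ((hasSum_nat_add_iff' 2).2 hA).mul_left p
  have hB2 := ((hasSum_nat_add_iff' 2).2 hB).mul_left s
  rw [← hasSum_nat_add_iff' 2]
  have h := (hA2.add hB2).add (hA1.add hB1)
  have hf : (fun n : ℕ ↦ melnikovCoef p q s t u v (n + 2) * z ^ (n + 2)) = fun n : ℕ ↦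
      p * (aCoef (n + 2) * z ^ (n + 2)) + s * (bCoef (n + 2) * z ^ (n + 2))
        + (q * z * (aCoef (n + 1) * z ^ (n + 1)) + t * z * (bCoef (n + 1) * z ^ (n + 1))) := by
    ext n
    rw [melnikovCoef]
    ring
  rw [hf]
  rw [show (p + q * z) * A + (s + t * z) * B + (u + v * z)
      - ∑ i ∈ Finset.range 2, melnikovCoef p q s t u v i * z ^ i = _ from ?_]
  · exact h
  · simp only [Finset.sum_range_succ, Finset.sum_range_zero, melnikovCoef]
    ring

theorem polyGrowth_melnikovCoef (p q s t u v : ℝ) : PolyGrowth (melnikovCoef p q s t u v) := by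
  refine ⟨(|p| + |s| + |q| + |t|) * (Real.pi / 2) + |u| + |v|, 0, fun n ↦ ?_⟩
  have hb : ∀ (x y : ℝ), |y| ≤ Real.pi / 2 → |x * y| ≤ |x| * (Real.pi / 2) := fun x y hy ↦ by
    rw [abs_mul]
    gcongr
  have ha := fun x n ↦ abs_le.1 (hb x _ (abs_aCoef_le n))
  have hb := fun x n ↦ abs_le.1 (hb x _ (abs_bCoef_le n))
  have hπ : ∀ x : ℝ, 0 ≤ |x| * (Real.pi / 2) := fun x ↦ by positivity
  rw [pow_zero, mul_one, abs_le]
  rcases n with _ | _ | n <;> simp only [melnikovCoef]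
  · constructor <;> linarith [ha p 0, hb s 0, hπ q, hπ t, abs_nonneg v, neg_abs_le u, le_abs_self u]
  · constructor <;> linarith [ha p 1, hb s 1, ha q 0, hb t 0, abs_nonneg u, neg_abs_le v,
      le_abs_self v]
  · constructor <;> linarith [ha p (n + 2), hb s (n + 2), ha q (n + 1), hb t (n + 1),
      abs_nonneg u, abs_nonneg v]

open Polynomial in
/-- The polynomial, of degree at most three, whose value at `n ≥ 2` has the sign of the `n`-th
coefficient `melnikovCoef`. -/
noncomputable def signPoly (p q s t : ℝ) : ℝ[X] :=
  C p * ((4 * X - 1) * (4 * X - 3) * (4 * X - 5)) - C s * ((4 * X - 3) * (4 * X - 5))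
    + C (16 * q) * (X * (X + 1) * (4 * X - 5)) - C (16 * t) * (X * (X + 1))

theorem eval_signPoly (p q s t x : ℝ) : (signPoly p q s t).eval x =
    p * ((4 * x - 1) * (4 * x - 3) * (4 * x - 5)) - s * ((4 * x - 3) * (4 * x - 5))
      + 16 * q * (x * (x + 1) * (4 * x - 5)) - 16 * t * (x * (x + 1)) := by
  simp [signPoly]

theorem natDegree_signPoly_le (p q s t : ℝ) : (signPoly p q s t).natDegree ≤ 3 := by
  unfold signPoly
  compute_degree

/-- Evaluation at `5/4`, `3/4`, `1/4` and `0` gives a triangular linear system. -/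
theorem signPoly_eq_zero {p q s t : ℝ} (h : signPoly p q s t = 0) :
    p = 0 ∧ q = 0 ∧ s = 0 ∧ t = 0 := by
  have he := eval_signPoly p q s t
  simp only [h, Polynomial.eval_zero] at he
  have h5 := he (5 / 4)
  have h3 := he (3 / 4)
  have h1 := he (1 / 4)
  have h0 := he 0
  norm_num at h5 h3 h1 h0
  subst h5
  norm_num at h3
  subst h3
  norm_num at h1
  subst h1
  norm_num at h0
  exact ⟨h0, rfl, rfl, rfl⟩

theorem melnikovCoef_mul (p q s t u v : ℝ) {n : ℕ} (hn : 2 ≤ n) :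
    melnikovCoef p q s t u v n * ((4 * n - 1) * (4 * n - 3) * (4 * n - 5))
      = aCoef n * (signPoly p q s t).eval (n : ℝ) := by
  obtain ⟨k, rfl⟩ := Nat.exists_eq_add_of_le' hn
  have h := aCoef_succ (k + 1)
  have h1 := four_mul_sub_one_ne_zero (k + 1)
  have h2 := four_mul_sub_one_ne_zero (k + 2)
  have hb1 : bCoef (k + 1) * (4 * (k + 1 : ℕ) - 1) = -aCoef (k + 1) := div_mul_cancel₀ _ h1
  have hb2 : bCoef (k + 2) * (4 * (k + 2 : ℕ) - 1) = -aCoef (k + 2) := div_mul_cancel₀ _ h2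
  rw [eval_signPoly, melnikovCoef]
  push_cast at *
  rw [show k + 1 + 1 = k + 2 by ring] at h
  linear_combination s * (4 * ((k : ℝ) + 2) - 3) * (4 * (k + 2) - 5) * hb2
    + t * (4 * ((k : ℝ) + 2) - 1) * (4 * (k + 2) - 3) * hb1
    - (q * (4 * ((k : ℝ) + 2) - 5) - t) * h

theorem encard_zeros_melnikovCoef_le {p q s t u v : ℝ}
    (hne : ¬(p = 0 ∧ q = 0 ∧ s = 0 ∧ t = 0 ∧ u = 0 ∧ v = 0)) :
    {z ∈ Ioo (0 : ℝ) 1 | ∑' n : ℕ, melnikovCoef p q s t u v n * z ^ n = 0}.encard ≤ 5 := by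
  -- Scaling the coefficients by `ε ≠ 0` does not change the zeros.
  have key : ∀ (L : List ℝ) (ε : ℝ), L.length ≤ 5 → ε ≠ 0 →
      (∀ n : ℕ, 0 ≤ (L.map fun m ↦ (n : ℝ) - m).prod * (ε * melnikovCoef p q s t u v n)) →
      (∃ n : ℕ, 0 < (L.map fun m ↦ (n : ℝ) - m).prod * (ε * melnikovCoef p q s t u v n)) →
      {z ∈ Ioo (0 : ℝ) 1 | ∑' n : ℕ, melnikovCoef p q s t u v n * z ^ n = 0}.encard ≤ 5 := by
    intro L ε hL hε h0 hpos
    have hg : PolyGrowth fun n ↦ ε * melnikovCoef p q s t u v n := by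
      obtain ⟨C, d, h⟩ := polyGrowth_melnikovCoef p q s t u v
      refine ⟨|ε| * C, d, fun n ↦ ?_⟩
      rw [abs_mul, mul_assoc]
      gcongr
      exact h n
    refine le_trans (encard_le_encard ?_)
      ((encard_zeros_powerSeries_le L _ hg h0 hpos).trans (by exact_mod_cast hL))
    rintro z ⟨hz, h⟩
    refine ⟨hz, ?_⟩
    simp only [mul_assoc, tsum_mul_left, h, mul_zero]
  by_cases hG : signPoly p q s t = 0
  · -- Only `u + v z` remains.
    obtain ⟨rfl, rfl, rfl, rfl⟩ := signPoly_eq_zero hG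
    by_cases hv : v = 0
    · subst hv
      have hu : u ≠ 0 := fun hu ↦ hne ⟨rfl, rfl, rfl, rfl, hu, rfl⟩
      refine key [] u (by simp) hu (fun n ↦ ?_) ⟨0, ?_⟩
      · rcases n with _ | _ | n <;> simp [melnikovCoef, mul_self_nonneg]
      · simpa [melnikovCoef] using hu
    · refine key [0] v (by simp) hv (fun n ↦ ?_) ⟨1, ?_⟩
      · rcases n with _ | _ | n <;> simp [melnikovCoef, mul_self_nonneg]
      · simpa [melnikovCoef] using hv
  · obtain ⟨L, ε, hL, hε, h0, hpos⟩ := exists_list_mul_eval_nonneg hG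
    have hfac : ∀ n : ℕ, 2 ≤ n → ∃ d : ℝ, 0 < d ∧
        ((0 :: 1 :: L).map fun m ↦ (n : ℝ) - m).prod * (ε * melnikovCoef p q s t u v n)
        = d * ((L.map fun m ↦ (n : ℝ) - m).prod * (ε * (signPoly p q s t).eval (n : ℝ))) := by
      intro n hn
      have hn2 : (2 : ℝ) ≤ n := by exact_mod_cast hn
      have hD : (0 : ℝ) < (4 * n - 1) * (4 * n - 3) * (4 * n - 5) :=
        mul_pos (mul_pos (by linarith) (by linarith)) (by linarith)
      refine ⟨n * (n - 1) * (aCoef n / ((4 * n - 1) * (4 * n - 3) * (4 * n - 5))),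
        mul_pos (mul_pos (by linarith) (by linarith)) (div_pos (aCoef_pos n) hD), ?_⟩
      have := (eq_div_iff hD.ne').2 (melnikovCoef_mul p q s t u v hn)
      rw [this]
      simp only [List.map_cons, List.prod_cons]
      ring
    -- The factors `n` and `n - 1` remove the two unconstrained coefficients `c₀` and `c₁`.
    refine key (0 :: 1 :: L) ε ?_ hε (fun n ↦ ?_) ?_
    · have := natDegree_signPoly_le p q s t
      simp only [List.length_cons]
      omega
    · rcases n with _ | _ | n
      · simp
      · simp
      · obtain ⟨d, hd, he⟩ := hfac (n + 2) (by omega)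
        rw [he]
        exact mul_nonneg hd.le (h0 _)
    · obtain ⟨n, hn, hGn⟩ : ∃ n : ℕ, 2 ≤ n ∧ (signPoly p q s t).eval (n : ℝ) ≠ 0 := by
        by_contra! hall
        refine hG (Polynomial.eq_zero_of_infinite_isRoot _ (Set.Infinite.mono ?_
          ((Set.Ici_infinite 2).image (Nat.cast_injective (R := ℝ)).injOn)))
        rintro _ ⟨n, hn, rfl⟩
        exact hall n hn
      obtain ⟨d, hd, he⟩ := hfac n hn
      exact ⟨n, by rw [he]; exact mul_pos hd (hpos _ hGn)⟩

/-- A nontrivial second Melnikov function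
`M₂ = (α₀+α₁h)I₀ + (β₀+β₁h)I₁ + (γ₀+γ₁h)I₂` has at most 5 zeros in `(−1/4, 0)`. -/
theorem zeros_M2 (α₀ α₁ β₀ β₁ γ₀ γ₁ : ℝ)
    (hne : ¬(α₀ = 0 ∧ α₁ = 0 ∧ β₀ = 0 ∧ β₁ = 0 ∧ γ₀ = 0 ∧ γ₁ = 0)) :
    {h ∈ Set.Ioo (-(1:ℝ)/4) 0 |
      (α₀ + α₁*h) * AbI 0 h + (β₀ + β₁*h) * AbI 1 h + (γ₀ + γ₁*h) * AbI 2 h = 0}.encard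
      ≤ 5 := by
  -- With `h = (z - 1) / 4` one has `α₀ + α₁ h = (α₀ - α₁ / 4) + (α₁ / 4) z`, and so on.
  refine le_trans (Set.encard_le_encard_of_injOn (f := fun h ↦ 1 + 4 * h)
    (t := {z ∈ Ioo (0 : ℝ) 1 | ∑' n : ℕ, melnikovCoef (α₀ - α₁ / 4) (α₁ / 4) (γ₀ - γ₁ / 4) (γ₁ / 4)
      ((β₀ - β₁ / 4) * (Real.pi / 2)) (β₁ / 4 * (Real.pi / 2)) n * z ^ n = 0})
    ?_ fun x _ y _ hxy ↦ by simpa using hxy)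
    (encard_zeros_melnikovCoef_le ?_)
  · rintro h ⟨hh, hM⟩
    have hz : 1 + 4 * h ∈ Ioo (0 : ℝ) 1 := ⟨by linarith [hh.1], by linarith [hh.2]⟩
    refine ⟨hz, ?_⟩
    have hr0 : 0 < √(1 + 4 * h) := Real.sqrt_pos.2 hz.1
    have hr1 : √(1 + 4 * h) < 1 := by
      rw [Real.sqrt_lt' one_pos]
      linarith [hz.2]
    have hA := hasSum_integral_rpow (-1 / 2) hr0 hr1
    have hB := hasSum_integral_rpow (1 / 2) hr0 hr1
    simp only [Real.sq_sqrt hz.1.le, ← bCoef_eq] at hA hB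
    have h1 : AbI 1 h = (1 + 4 * h) / √2 * (Real.pi / 2) := by
      rw [AbI_eq 1 hh]
      simp [integral_sin_sq]
    rw [AbI_eq 0 hh, h1, AbI_eq 2 hh, show (((0 : ℕ) : ℝ) - 1) / 2 = -1 / 2 by norm_num,
      show (((2 : ℕ) : ℝ) - 1) / 2 = 1 / 2 by norm_num] at hM
    have hfac : (1 + 4 * h) / √2 ≠ 0 := (div_pos hz.1 (by positivity)).ne'
    rw [(hasSum_melnikovCoef hA hB).tsum_eq]
    refine (mul_eq_zero.1 (Eq.trans ?_ hM)).resolve_left hfac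
    ring
  · rintro ⟨h1, h2, h3, h4, h5, h6⟩
    have hπ : Real.pi / 2 ≠ 0 := by positivity
    have h5 := (mul_eq_zero.1 h5).resolve_right hπ
    have h6 := (mul_eq_zero.1 h6).resolve_right hπ
    exact hne ⟨by linarith, by linarith, by linarith, by linarith, by linarith, by linarith⟩
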